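/- There is no elliptic curve E over F_27 with exactly 25 rational points. -/

import Mathlib

open Finset

section FieldOfOrder27

variable {F : Type*} [Field F] [Fintype F]

theorem charP_three_of_card (hF : Fintype.card F = 27) : CharP F 3 :=
  charP_of_card_eq_prime_pow (p := 3) (f := 3) (by rw [hF]; norm_num)

theorem ringChar_ne_two_of_card (hF : Fintype.card F = 27) : ringChar F ≠ 2 := by
  have := charP_three_of_card hF
  rw [ringChar.eq F 3]
  norm_num

theorem sum_pow_of_card (hF : Fintype.card F = 27) {n : ℕ} (hn : n ≤ 39) :
    ∑ x : F, x ^ n = if n = 26 then -1 else 0 := by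
  classical
  have := charP_three_of_card hF
  rcases lt_trichotomy n 26 with h | rfl | h
  · rw [if_neg h.ne]
    exact FiniteField.sum_pow_lt_card_sub_one F n (by rw [hF]; exact h)
  · have h1 : ∀ x : F, x ^ 26 = 1 - if x = 0 then 1 else 0 := by
      intro x
      by_cases hx : x = 0
      · simp [hx]
      · have := FiniteField.pow_card_sub_one_eq_one x hx
        rw [hF] at this
        simpa [hx] using this
    have h27 : (27 : F) = 0 := by
      have := Nat.cast_card_eq_zero F
      rw [hF] at this
      exact_mod_cast this
    simp [h1, hF, h27]
  · have h1 : ∀ x : F, x ^ n = x ^ (n - 26) := by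
      intro x
      obtain ⟨k, rfl⟩ := Nat.exists_eq_add_of_lt h
      have := FiniteField.pow_card x
      rw [hF] at this
      rw [show 26 + k + 1 = 27 + k by ring, pow_add, this,
        show 27 + k - 26 = k + 1 by omega, pow_succ']
    rw [if_neg h.ne', sum_congr rfl fun x _ => h1 x]
    exact FiniteField.sum_pow_lt_card_sub_one F _ (by rw [hF]; omega)

theorem pow_thirteen_eq {R : Type*} [Monoid R] (z : R) : z ^ 13 = z * z ^ 3 * z ^ 9 := by
  rw [← pow_succ', ← pow_add]

/-- The Hasse invariant of `y² = x³ + ax² + bx + c` over the field with 27 elements. -/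
theorem sum_cubic_pow_thirteen (hF : Fintype.card F = 27) (a b c : F) :
    ∑ x : F, (x ^ 3 + a * x ^ 2 + b * x + c) ^ 13 = -a ^ 13 := by
  have := charP_three_of_card hF
  let u : ℕ → F := fun i => if i = 0 then c else if i = 1 then b else if i = 2 then a else 1
  have hu : ∀ x : F, (x ^ 3 + a * x ^ 2 + b * x + c) ^ 13 =
      ∑ i ∈ range 4, ∑ j ∈ range 4, ∑ k ∈ range 4,
        u i * u j ^ 3 * u k ^ 9 * x ^ (i + 3 * j + 9 * k) := by
    intro x
    have h3 : ∀ s t : F, (s + t) ^ 3 = s ^ 3 + t ^ 3 := fun s t => add_pow_char s t 3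
    have h9 : ∀ s t : F, (s + t) ^ 9 = s ^ 9 + t ^ 9 := fun s t => add_pow_char_pow s t 3 2
    have hs : x ^ 3 + a * x ^ 2 + b * x + c = ∑ i ∈ range 4, u i * x ^ i := by
      simp [sum_range_succ, u]
      ring
    have hs3 : (∑ i ∈ range 4, u i * x ^ i) ^ 3 = ∑ i ∈ range 4, u i ^ 3 * x ^ (3 * i) := by
      simp only [sum_range_succ, sum_range_zero, h3]
      ring
    have hs9 : (∑ i ∈ range 4, u i * x ^ i) ^ 9 = ∑ i ∈ range 4, u i ^ 9 * x ^ (9 * i) := by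
      simp only [sum_range_succ, sum_range_zero, h9]
      ring
    rw [pow_thirteen_eq, hs, hs3, hs9, sum_mul_sum, sum_mul]
    refine sum_congr rfl fun i _ => ?_
    rw [sum_mul_sum]
    refine sum_congr rfl fun j _ => sum_congr rfl fun k _ => ?_
    ring
  have key : ∀ i ∈ range 4, ∀ j ∈ range 4, ∀ k ∈ range 4,
      ∑ x : F, u i * u j ^ 3 * u k ^ 9 * x ^ (i + 3 * j + 9 * k) =
        if i = 2 ∧ j = 2 ∧ k = 2 then -a ^ 13 else 0 := by
    intro i hi j hj k hk
    rw [mem_range] at hi hj hk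
    rw [← mul_sum, sum_pow_of_card hF (by omega)]
    by_cases h : i = 2 ∧ j = 2 ∧ k = 2
    · obtain ⟨rfl, rfl, rfl⟩ := h
      simp [u]
      ring
    · rw [if_neg h, if_neg (by omega), mul_zero]
  simp_rw [hu]
  rw [sum_comm]
  calc _ = ∑ i ∈ range 4, ∑ j ∈ range 4, ∑ k ∈ range 4,
        if i = 2 ∧ j = 2 ∧ k = 2 then -a ^ 13 else 0 := by
        refine sum_congr rfl fun i hi => ?_
        rw [sum_comm]
        refine sum_congr rfl fun j hj => ?_
        rw [sum_comm]
        exact sum_congr rfl fun k hk => key i hi j hj k hk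
    _ = _ := by simp [sum_range_succ]

theorem exists_basis_cons_of_ne_zero [Algebra (ZMod 3) F] (hF : Fintype.card F = 27)
    {d : F} (hd : d ≠ 0) :
    ∃ (e f : F) (E : (Fin 3 → ZMod 3) ≃ F), ∀ g, E g = g 0 • f + g 1 • e + g 2 • d := by
  have hfr : Module.finrank (ZMod 3) F = 3 := by
    have h := Module.card_eq_pow_finrank (K := ZMod 3) (V := F)
    rw [hF, ZMod.card] at h
    exact Nat.pow_right_injective (by norm_num : 2 ≤ 3) (h.symm.trans (by norm_num : 27 = 3 ^ 3))
  have hex : ∀ {n : ℕ} (v : Fin n → F), n < 3 →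
      ∃ x, x ∉ Submodule.span (ZMod 3) (Set.range v) := by
    intro n v hn
    by_contra! h
    have h1 := finrank_range_le_card (R := ZMod 3) v
    rw [Set.finrank, Submodule.eq_top_iff'.mpr h, finrank_top, hfr, Fintype.card_fin] at h1
    omega
  obtain ⟨e, he⟩ := hex ![d] (by norm_num)
  obtain ⟨f, hf⟩ := hex ![e, d] (by norm_num)
  have h1 : LinearIndependent (ZMod 3) ![d] := by
    rw [linearIndependent_unique_iff]
    simpa using hd
  have h2 : LinearIndependent (ZMod 3) ![e, d] := linearIndependent_finCons.mpr ⟨h1, he⟩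
  have h3 : LinearIndependent (ZMod 3) ![f, e, d] := linearIndependent_finCons.mpr ⟨h2, hf⟩
  let b := basisOfLinearIndependentOfCardEqFinrank h3 (by simp [hfr])
  refine ⟨e, f, b.equivFun.symm.toEquiv, fun g => ?_⟩
  simp [b, Module.Basis.equivFun_symm_apply, Fin.sum_univ_three]

/-- The thirteenth powers over a coset of a two-dimensional subspace over the prime field sum to zero. -/
theorem sum_coset_pow_thirteen [CharP F 3] [Algebra (ZMod 3) F] (v w c : F) :
    ∑ i : ZMod 3, ∑ j : ZMod 3, (i • v + j • w + c) ^ 13 = 0 := by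
  have h3 : ∀ s t : F, (s + t) ^ 3 = s ^ 3 + t ^ 3 := fun s t => add_pow_char s t 3
  have h9 : ∀ s t : F, (s + t) ^ 9 = s ^ 9 + t ^ 9 := fun s t => add_pow_char_pow s t 3 2
  have e3 : ∀ (i : ZMod 3) (s : F), (i • s) ^ 3 = i • s ^ 3 := by
    intro i s
    rw [smul_pow, ZMod.pow_card]
  have e9 : ∀ (i : ZMod 3) (s : F), (i • s) ^ 9 = i • s ^ 9 := by
    intro i s
    rw [show 9 = 3 * 3 by norm_num, pow_mul, e3, e3, pow_mul]
  have hz : (3 : F) = 0 := by exact_mod_cast CharP.cast_eq_zero F 3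
  have hsum : ∀ g : ZMod 3 → F, ∑ i, g i = g 0 + g 1 + g (-1) := fun g => Fin.sum_univ_three g
  simp only [pow_thirteen_eq, h3, h9, e3, e9]
  generalize v ^ 3 = v3, w ^ 3 = w3, c ^ 3 = c3, v ^ 9 = v9, w ^ 9 = w9, c ^ 9 = c9
  simp only [hsum, zero_smul, one_smul, neg_smul]
  ring_nf
  have hn9 : (9 : F) = 0 := by linear_combination 3 * hz
  have h6 : (6 : F) = 0 := by linear_combination 2 * hz
  simp [hn9, h6]

theorem sum_quadraticChar_cubic_ne [DecidableEq F] (hF : Fintype.card F = 27) {a b c : F}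
    (hab : a = 0 → b ≠ 0) :
    ∑ x : F, quadraticChar F (x ^ 3 + a * x ^ 2 + b * x + c) ≠ -3 := by
  have := charP_three_of_card hF
  have h2 := ringChar_ne_two_of_card hF
  have hz : (3 : F) = 0 := by exact_mod_cast CharP.cast_eq_zero F 3
  have hχ : ∀ x : F, (quadraticChar F x : F) = x ^ 13 := fun x => by
    rw [quadraticChar_eq_pow_of_char_ne_two' h2, hF]
  intro hs
  obtain rfl : a = 0 := by
    have h := congrArg (Int.cast : ℤ → F) hs
    push_cast at h
    simp only [hχ, sum_cubic_pow_thirteen hF, hz] at h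
    simpa using h
  have hb := hab rfl
  let φ : F →+ F :=
    { toFun := fun x => x ^ 3 + b * x
      map_zero' := by simp
      map_add' := fun x y => by rw [add_pow_char x y 3]; ring }
  have hφ : ∀ x, x ^ 3 + 0 * x ^ 2 + b * x + c = φ x + c := fun x => by simp [φ]
  simp only [hφ] at hs
  by_cases hinj : Function.Injective φ
  · have hbij : Function.Bijective fun x => φ x + c :=
      Finite.injective_iff_bijective.mp fun x y h => hinj (add_right_cancel h)
    rw [hbij.sum_comp (fun x => quadraticChar F x), quadraticChar_sum_zero h2] at hs
    norm_num at hs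
  · rw [injective_iff_map_eq_zero] at hinj
    push Not at hinj
    obtain ⟨d, hd, hd0⟩ := hinj
    let _ : Algebra (ZMod 3) F := ZMod.algebra F 3
    obtain ⟨e, f, E, hE⟩ := exists_basis_cons_of_ne_zero hF hd0
    have hsm : ∀ (i : ZMod 3) x, φ (i • x) = i • φ x := fun i x => ZMod.map_smul φ i x
    let T : ℤ := ∑ i : ZMod 3, ∑ j : ZMod 3, quadraticChar F (i • φ f + j • φ e + c)
    have hT : 3 * T = -3 := by
      rw [← hs, ← E.sum_comp]
      simp only [hE, map_add, hsm, hd, smul_zero, add_zero]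
      let P : (ZMod 3 × ZMod 3 × ZMod 3) ≃ (Fin 3 → ZMod 3) :=
        { toFun := fun p => ![p.1, p.2.1, p.2.2]
          invFun := fun g => (g 0, g 1, g 2)
          left_inv := fun p => rfl
          right_inv := fun g => by ext i; fin_cases i <;> rfl }
      rw [← P.sum_comp]
      have hP : ∀ p, P p 0 = p.1 ∧ P p 1 = p.2.1 := fun p => ⟨rfl, rfl⟩
      simp [hP, Fintype.sum_prod_type, T, mul_sum]
    have hT1 : T = -1 := by omega
    have h := congrArg (Int.cast : ℤ → F) hT1
    simp only [T] at h
    push_cast at h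
    simp only [hχ, sum_coset_pow_thirteen] at h
    simp at h

end FieldOfOrder27

theorem natCard_affine_point_eq {F : Type*} [Field F] [Fintype F] [DecidableEq F]
    (hF : ringChar F ≠ 2) (W : WeierstrassCurve F) [W.IsElliptic] :
    (Nat.card W.toAffine.Point : ℤ) = 1 + Fintype.card F +
      ∑ x : F, quadraticChar F (4 * x ^ 3 + W.b₂ * x ^ 2 + 2 * W.b₄ * x + W.b₆) := by
  classical
  have h2 : (2 : F) ≠ 0 := Ring.two_ne_zero hF
  have h1 : Nat.card W.toAffine.Point =
      Nat.card {p : F × F // W.toAffine.Equation p.1 p.2} + 1 := by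
    rw [Nat.card_congr W.toAffine.pointEquiv]
    exact Finite.card_option
  have hfib : ∀ x : F, (Nat.card {y : F // W.toAffine.Equation x y} : ℤ) =
      quadraticChar F (4 * x ^ 3 + W.b₂ * x ^ 2 + 2 * W.b₄ * x + W.b₆) + 1 := by
    intro x
    rw [← quadraticChar_card_sqrts hF, Set.toFinset_card, ← Nat.card_eq_fintype_card]
    congr 1
    refine Nat.card_congr
      { toFun := fun y => ⟨2 * y.1 + W.a₁ * x + W.a₃, ?_⟩
        invFun := fun z => ⟨(z.1 - W.a₁ * x - W.a₃) / 2, ?_⟩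
        left_inv := fun y => Subtype.ext (by simp only; field_simp; ring)
        right_inv := fun z => Subtype.ext (by simp only; field_simp; ring) }
    · have := (WeierstrassCurve.Affine.equation_iff _ _).mp y.2
      simp only [Set.mem_ofPred_eq, WeierstrassCurve.b₂, WeierstrassCurve.b₄, WeierstrassCurve.b₆]
      linear_combination 4 * this
    · have := z.2
      simp only [Set.mem_ofPred_eq, WeierstrassCurve.b₂, WeierstrassCurve.b₄,
        WeierstrassCurve.b₆] at this
      rw [WeierstrassCurve.Affine.equation_iff]
      field_simp
      linear_combination this
  have hsigma : Nat.card {p : F × F // W.toAffine.Equation p.1 p.2} =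
      ∑ x : F, Nat.card {y : F // W.toAffine.Equation x y} := by
    rw [← Nat.card_sigma]
    exact Nat.card_congr (Equiv.subtypeProdEquivSigmaSubtype fun x y => W.toAffine.Equation x y)
  rw [h1, hsigma]
  push_cast
  simp only [hfib, sum_add_distrib, sum_const, card_univ]
  simp
  ring

/-- There is no elliptic curve over the field with 27 elements having exactly 25
rational points. -/
theorem stmt_6 (F : Type*) [Field F] [Fintype F] (hF : Fintype.card F = 27)
    (W : WeierstrassCurve F) [W.IsElliptic] :
    Nat.card W.toAffine.Point ≠ 25 := by
  classical
  have := charP_three_of_card hF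
  have hz : (3 : F) = 0 := by exact_mod_cast CharP.cast_eq_zero F 3
  intro h
  have hcard := natCard_affine_point_eq (ringChar_ne_two_of_card hF) W
  rw [h, hF, show (4 : F) = 1 by linear_combination hz] at hcard
  simp only [one_mul] at hcard
  refine sum_quadraticChar_cubic_ne hF (a := W.b₂) (b := 2 * W.b₄) (c := W.b₆) ?_
    (by push_cast at hcard; linarith)
  intro hb2 hb4
  refine W.isUnit_Δ.ne_zero ?_
  rw [W.Δ_of_char_three, hb2]
  linear_combination -4 * W.b₄ ^ 2 * hb4
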